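/- For all real numbers q, q' > 1 and all c, c' with 0 < c, c' < ∞, the C*-algebras C_{q,c} and C_{q',c'} are isomorphic as unital C*-algebras (each being isomorphic to the C*-algebra of the groupoid 𝔊'); in particular the C*-algebra of the nonstandard Podleś quantum 2-sphere is independent of the parameters q and c. -/

import Mathlib

set_option synthInstance.maxHeartbeats 1000000
set_option maxHeartbeats 1000000

noncomputable section

/-- The Hilbert space `ℓ²(ℤ) ⊗ ℓ²(ℕ) = ℓ²(ℤ × ℕ)`. -/
abbrev HC : Type := lp (fun _ : ℤ × ℕ => ℂ) 2

/-- The standard orthonormal basis vectors `e_m ⊗ e_j` of `ℓ²(ℤ × ℕ)`. -/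
def ec (m : ℤ) (j : ℕ) : HC := lp.single 2 (m, j) 1

/-- `IsXPair q c x` says that `x 0, x 1` are the operators
`x₁ = √c (S ⊗ α) + S* ⊗ γ` and `x₂ = -√c q⁻¹ (S ⊗ γ) + S* ⊗ α*` on `ℓ²(ℤ) ⊗ ℓ²(ℕ)`,
where `S` is the bilateral shift, `α e_j = (1 - q^{-2j})^{1/2} e_{j-1}` (`α e_0 = 0`) and
`γ e_j = q^{-j} e_j`. -/
def IsXPair (q c : ℝ) (x : Fin 2 → (HC →L[ℂ] HC)) : Prop :=
  (∀ m : ℤ, x 0 (ec m 0) = ec (m - 1) 0) ∧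
  (∀ (m : ℤ) (j : ℕ),
    x 0 (ec m (j + 1)) =
      (Real.sqrt c * Real.sqrt (1 - q ^ (-2 * ((j : ℤ) + 1)))) • ec (m + 1) j +
        (q ^ (-((j : ℤ) + 1))) • ec (m - 1) (j + 1)) ∧
  (∀ (m : ℤ) (j : ℕ),
    x 1 (ec m j) =
      (-Real.sqrt c * q⁻¹ * q ^ (-(j : ℤ))) • ec (m + 1) j +
        Real.sqrt (1 - q ^ (-2 * ((j : ℤ) + 1))) • ec (m - 1) (j + 1))

/-- `C_{q,c}`: the unital C*-subalgebra of bounded operators on `ℓ²(ℤ) ⊗ ℓ²(ℕ)` generated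
by `{x_i* x_j : i, j ∈ {1,2}}`; the concrete realization of the C*-algebra `C(S²_{μc})`
(`μ = q⁻¹`) of a nonstandard Podleś quantum 2-sphere, i.e. of `ℂP¹_{q,c}`. -/
def Cqc (x : Fin 2 → (HC →L[ℂ] HC)) : StarSubalgebra ℂ (HC →L[ℂ] HC) :=
  (StarAlgebra.adjoin ℂ
    {a : HC →L[ℂ] HC | ∃ i j : Fin 2, a = star (x i) * x j}).topologicalClosure


section Aux

open scoped InnerProductSpace

lemma inner_ec (m : ℤ) (j : ℕ) (v : HC) : ⟪ec m j, v⟫_ℂ = v (m, j) := by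
  simp [ec, lp.inner_single_left]

lemma hc_ext {v w : HC} (h : ∀ m j, ⟪ec m j, v⟫_ℂ = ⟪ec m j, w⟫_ℂ) : v = w := by
  ext ⟨m, j⟩
  simpa only [inner_ec] using h m j

lemma real_smul_hc (a : ℝ) (v : HC) : a • v = (a : ℂ) • v := by
  rfl

lemma inner_ec_ec (m m' : ℤ) (j j' : ℕ) :
    ⟪ec m j, ec m' j'⟫_ℂ = if m = m' ∧ j = j' then 1 else 0 := by
  rw [inner_ec]
  simp [ec, lp.single_apply, Pi.single_apply]

lemma clm_ext {T U : HC →L[ℂ] HC} (h : ∀ m j, T (ec m j) = U (ec m j)) : T = U := by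
  have h1 : ∀ m j, star T (ec m j) = star U (ec m j) := by
    intro m j
    apply hc_ext
    intro m' j'
    rw [ContinuousLinearMap.star_eq_adjoint, ContinuousLinearMap.star_eq_adjoint,
      ContinuousLinearMap.adjoint_inner_right, ContinuousLinearMap.adjoint_inner_right, h]
  ext1 v
  apply hc_ext
  intro m j
  have := h1 m j
  rw [ContinuousLinearMap.star_eq_adjoint, ContinuousLinearMap.star_eq_adjoint] at this
  rw [← ContinuousLinearMap.adjoint_inner_left, ← ContinuousLinearMap.adjoint_inner_left, this]

/-- basis vectors with an integer second index, zero for negative index -/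
def ez (m j : ℤ) : HC := if 0 ≤ j then ec m j.toNat else 0

lemma ez_nat (m : ℤ) (j : ℕ) : ez m j = ec m j := by simp [ez]
lemma ez_neg (m : ℤ) {j : ℤ} (h : j < 0) : ez m j = 0 := by simp [ez, h]

lemma inner_ez_ez (m m' : ℤ) (j j' : ℤ) :
    ⟪ez m j, ez m' j'⟫_ℂ = if 0 ≤ j ∧ m = m' ∧ j = j' then 1 else 0 := by
  unfold ez
  by_cases h : 0 ≤ j <;> by_cases h' : 0 ≤ j'
  · lift j to ℕ using h
    lift j' to ℕ using h'
    simp [inner_ec_ec]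
  · have : j ≠ j' := by rintro rfl; exact h' h
    simp [h, h', this]
  · simp [h]
  · simp [h]

/-- the weights -/
def sw (q : ℝ) (j : ℤ) : ℂ := ((Real.sqrt (1 - q ^ (-2 * j)) : ℝ) : ℂ)
def tw (q : ℝ) (j : ℤ) : ℂ := ((q ^ (-j) : ℝ) : ℂ)

lemma sw_sq {q : ℝ} (hq : 1 < q) {j : ℤ} (hj : 0 ≤ j) : sw q j ^ 2 = 1 - tw q j ^ 2 := by
  unfold sw tw
  have h1 : q ^ (-2 * j) ≤ 1 := zpow_le_one_of_nonpos₀ hq.le (by omega)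
  rw [← Complex.ofReal_pow, Real.sq_sqrt (by linarith)]
  have : q ^ (-2 * j) = (q ^ (-j)) ^ 2 := by
    rw [← zpow_natCast, ← zpow_mul]; congr 1; push_cast; ring
  rw [this]; push_cast; ring

lemma sw_nonpos {q : ℝ} (hq : 1 < q) {j : ℤ} (hj : j ≤ 0) : sw q j = 0 := by
  unfold sw
  have h1 : 1 ≤ q ^ (-2 * j) := one_le_zpow₀ hq.le (by omega)
  rw [Real.sqrt_eq_zero_of_nonpos (by linarith)]; simp

lemma sw_ne {q : ℝ} (hq : 1 < q) {j : ℤ} (hj : 0 < j) : sw q j ≠ 0 := by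
  unfold sw
  have h1 : q ^ (-2 * j) < 1 := zpow_lt_one_of_neg₀ hq (by omega)
  have := Real.sqrt_pos.2 (show 0 < 1 - q ^ (-2 * j) by linarith)
  exact_mod_cast this.ne'

lemma sw_zero {q : ℝ} : sw q 0 = 0 := by simp [sw]

lemma tw_add {q : ℝ} (hq : 1 < q) (i j : ℤ) : tw q (i + j) = tw q i * tw q j := by
  unfold tw
  rw [neg_add, zpow_add₀ (by linarith)]; push_cast; rfl

lemma tw_ne {q : ℝ} (hq : 1 < q) (j : ℤ) : tw q j ≠ 0 := by
  unfold tw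
  have : q ^ (-j) ≠ 0 := zpow_ne_zero _ (by linarith)
  exact_mod_cast this

lemma star_sw (q : ℝ) (j : ℤ) : (starRingEnd ℂ) (sw q j) = sw q j := Complex.conj_ofReal _
lemma star_tw (q : ℝ) (j : ℤ) : (starRingEnd ℂ) (tw q j) = tw q j := Complex.conj_ofReal _

/-- complex square root of `c` -/
def rc (c : ℝ) : ℂ := ((Real.sqrt c : ℝ) : ℂ)
lemma rc_sq {c : ℝ} (hc : 0 < c) : rc c ^ 2 = (c : ℂ) := by
  unfold rc; rw [← Complex.ofReal_pow, Real.sq_sqrt hc.le]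
lemma rc_ne {c : ℝ} (hc : 0 < c) : rc c ≠ 0 := by
  unfold rc; exact_mod_cast (Real.sqrt_pos.2 hc).ne'
lemma star_rc (c : ℝ) : (starRingEnd ℂ) (rc c) = rc c := Complex.conj_ofReal _

variable {q c : ℝ} {x : Fin 2 → (HC →L[ℂ] HC)}

lemma x0_ez (hq : 1 < q) (hx : IsXPair q c x) (m j : ℤ) :
    x 0 (ez m j) = (rc c * sw q j) • ez (m + 1) (j - 1) + tw q j • ez (m - 1) j := by
  rcases lt_trichotomy j 0 with h | h | h
  · simp [ez_neg _ h, sw_nonpos hq h.le]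
  · subst h
    have := hx.1 m
    rw [← ez_nat, ← ez_nat] at this
    simpa [sw_zero, tw] using this
  · obtain ⟨k, rfl⟩ : ∃ k : ℕ, j = k + 1 := ⟨(j - 1).toNat, by omega⟩
    have := hx.2.1 m k
    simp only [← ez_nat, real_smul_hc] at this
    push_cast at this
    rw [this]
    simp [rc, sw, tw]

lemma x1_ez (hq : 1 < q) (hx : IsXPair q c x) (m j : ℤ) :
    x 1 (ez m j) = (-rc c * tw q (j + 1)) • ez (m + 1) j + sw q (j + 1) • ez (m - 1) (j + 1) := by
  rcases lt_or_ge j 0 with h | h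
  · simp [ez_neg _ h, sw_nonpos hq (show j + 1 ≤ 0 by omega)]
  · lift j to ℕ using h
    have := hx.2.2 m j
    simp only [← ez_nat, real_smul_hc] at this
    push_cast at this
    rw [this, tw_add hq]
    simp [rc, sw, tw]
    ring_nf

lemma star_inner (T : HC →L[ℂ] HC) (v w : HC) : ⟪v, star T w⟫_ℂ = ⟪T v, w⟫_ℂ := by
  rw [ContinuousLinearMap.star_eq_adjoint, ContinuousLinearMap.adjoint_inner_right]

lemma star_inner' (T : HC →L[ℂ] HC) (v w : HC) : ⟪star T v, w⟫_ℂ = ⟪v, T w⟫_ℂ := by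
  rw [ContinuousLinearMap.star_eq_adjoint, ContinuousLinearMap.adjoint_inner_left]

lemma x0s_ez (hq : 1 < q) (hx : IsXPair q c x) (m j : ℤ) :
    star (x 0) (ez m j) =
      (rc c * sw q (j + 1)) • ez (m - 1) (j + 1) + tw q j • ez (m + 1) j := by
  apply hc_ext
  intro m' j'
  rw [star_inner, ← ez_nat, x0_ez hq hx]
  simp only [inner_add_left, inner_add_right, inner_smul_left, inner_smul_right, inner_ez_ez,
    map_mul, star_sw, star_tw, star_rc]
  by_cases h1 : (j' : ℤ) = j
  · subst h1
    have e1 : (m' - 1 = m) ↔ (m' = m + 1) := by omega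
    simp [e1]
  · by_cases h2 : (j' : ℤ) = j + 1
    · have e1 : (m' + 1 = m) ↔ (m' = m - 1) := by omega
      by_cases h3 : 0 ≤ j
      · simp [h2, e1, h3, show (0:ℤ) ≤ j + 1 by omega]
      · simp [h2, h3, e1, sw_nonpos hq (show j + 1 ≤ 0 by omega)]
    · simp [h1, h2, show ¬ ((j':ℤ) - 1 = j) by omega]

lemma x1s_ez (hq : 1 < q) (hx : IsXPair q c x) (m j : ℤ) :
    star (x 1) (ez m j) =
      (-rc c * tw q (j + 1)) • ez (m - 1) j + sw q j • ez (m + 1) (j - 1) := by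
  apply hc_ext
  intro m' j'
  rw [star_inner, ← ez_nat, x1_ez hq hx]
  simp only [inner_add_left, inner_add_right, inner_smul_left, inner_smul_right, inner_ez_ez,
    map_mul, map_neg, star_sw, star_tw, star_rc]
  by_cases h1 : (j' : ℤ) = j
  · subst h1
    have e1 : (m' + 1 = m) ↔ (m' = m - 1) := by omega
    simp [e1, show ¬ ((j' : ℤ) = j' - 1) by omega]
  · by_cases h2 : (j' : ℤ) = j - 1
    · have e1 : (m' - 1 = m) ↔ (m' = m + 1) := by omega
      have h4 : 0 ≤ j - 1 := by omega
      simp [h2, e1, show 0 ≤ j by omega, show 1 ≤ j by omega]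
    · simp [h1, h2, show ¬ ((j':ℤ) + 1 = j) by omega]

/-- `A = x₀* x₀ - c` -/
def opA (c : ℝ) (x : Fin 2 → (HC →L[ℂ] HC)) : HC →L[ℂ] HC :=
  star (x 0) * x 0 - (c : ℂ) • 1
/-- `B = x₀* x₁` -/
def opB (x : Fin 2 → (HC →L[ℂ] HC)) : HC →L[ℂ] HC := star (x 0) * x 1

lemma opA_star (c : ℝ) (x : Fin 2 → (HC →L[ℂ] HC)) : star (opA c x) = opA c x := by
  simp [opA]

lemma opB_star (x : Fin 2 → (HC →L[ℂ] HC)) : star (opB x) = star (x 1) * x 0 := by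
  simp [opB]

lemma opA_ez (hq : 1 < q) (hc : 0 < c) (hx : IsXPair q c x) (m j : ℤ) :
    opA c x (ez m j) = ((1 - c) * tw q j ^ 2) • ez m j
      + (rc c * sw q j * tw q (j - 1)) • ez (m + 2) (j - 1)
      + (rc c * tw q j * sw q (j + 1)) • ez (m - 2) (j + 1) := by
  rcases lt_or_ge j 0 with h | h
  · simp [ez_neg _ h, sw_nonpos hq h.le, sw_nonpos hq (show j + 1 ≤ 0 by omega)]
  have h0 := sw_sq hq h
  simp only [opA, sub_apply, mul_apply_eq_comp,
    smul_apply, one_apply_eq_self, x0_ez hq hx, map_add, map_smul,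
    x0s_ez hq hx]
  rw [show m + 1 - 1 = m by ring, show m - 1 - 1 = m - 2 by ring, show m + 1 + 1 = m + 2 by ring,
    show j - 1 + 1 = j by ring, show m - 1 + 1 = m by ring]
  rw [← rc_sq hc]
  match_scalars
  · linear_combination (rc c ^ 2) * h0
  · ring
  · ring

lemma opB_ez (hq : 1 < q) (hc : 0 < c) (hx : IsXPair q c x) (m j : ℤ) :
    opB x (ez m j) = ((1 - c) * tw q (j + 1) * sw q (j + 1)) • ez m (j + 1)
      + (rc c * sw q (j + 1) * sw q (j + 2)) • ez (m - 2) (j + 2)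
      - (rc c * tw q (j + 1) * tw q j) • ez (m + 2) j := by
  simp only [opB, mul_apply_eq_comp, x1_ez hq hx, map_add, map_smul,
    x0s_ez hq hx]
  rw [show m + 1 - 1 = m by ring, show m - 1 - 1 = m - 2 by ring, show m + 1 + 1 = m + 2 by ring,
    show j + 1 + 1 = j + 2 by ring, show m - 1 + 1 = m by ring]
  rw [← rc_sq hc]
  module

lemma opBs_ez (hq : 1 < q) (hc : 0 < c) (hx : IsXPair q c x) (m j : ℤ) :
    star (opB x) (ez m j) = ((1 - c) * tw q j * sw q j) • ez m (j - 1)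
      + (rc c * sw q j * sw q (j - 1)) • ez (m + 2) (j - 2)
      - (rc c * tw q (j + 1) * tw q j) • ez (m - 2) j := by
  simp only [opB_star, mul_apply_eq_comp, x0_ez hq hx, map_add, map_smul,
    x1s_ez hq hx]
  rw [show m + 1 - 1 = m by ring, show m - 1 - 1 = m - 2 by ring, show m + 1 + 1 = m + 2 by ring,
    show j - 1 - 1 = j - 2 by ring, show m - 1 + 1 = m by ring, show j - 1 + 1 = j by ring]
  rw [← rc_sq hc]
  module

/-- two operators agreeing on all `ez m j` with `j ≥ 0` agree -/
lemma clm_ext_ez {T U : HC →L[ℂ] HC} (h : ∀ m j, 0 ≤ j → T (ez m j) = U (ez m j)) : T = U := by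
  apply clm_ext
  intro m j
  rw [← ez_nat]
  exact h m j (by positivity)

lemma tw_one_sub (hq : 1 < q) (j : ℤ) : tw q j = tw q (j - 1) * tw q 1 := by
  rw [← tw_add hq]; congr 1; ring

lemma rel_x1 (hq : 1 < q) (hc : 0 < c) (hx : IsXPair q c x) :
    star (x 1) * x 1 = 1 - (tw q 1 ^ 2) • opA c x := by
  apply clm_ext_ez
  intro m j hj
  simp only [sub_apply, mul_apply_eq_comp,
    smul_apply, one_apply_eq_self, opA_ez hq hc hx, map_add,
    map_smul, x1_ez hq hx, x1s_ez hq hx]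
  rw [show m + 1 - 1 = m by ring, show m - 1 - 1 = m - 2 by ring, show m + 1 + 1 = m + 2 by ring,
    show j + 1 - 1 = j by ring, show m - 1 + 1 = m by ring]
  have h1 := sw_sq hq (show 0 ≤ j + 1 by omega)
  have h2 := rc_sq hc
  rw [tw_one_sub hq j]
  have e1 : tw q (j + 1) = tw q (j - 1) * tw q 1 * tw q 1 := by
    rw [← tw_one_sub hq, ← tw_add hq]
  have e2 : tw q (j + 1 + 1) = tw q (j - 1) * tw q 1 * tw q 1 * tw q 1 := by
    rw [tw_add hq (j + 1), e1]
  rw [e2, e1]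
  rw [e1] at h1
  generalize tw q (j - 1) = T at *
  generalize tw q 1 = μ at *
  generalize sw q (j + 1) = s1 at *
  rw [← h2]
  match_scalars
  · linear_combination h1
  · ring
  · ring

lemma rel_x0s (hq : 1 < q) (hc : 0 < c) (hx : IsXPair q c x) :
    x 0 * star (x 0) + x 1 * star (x 1) = (1 + (c : ℂ)) • 1 := by
  apply clm_ext_ez
  intro m j hj
  simp only [add_apply, mul_apply_eq_comp,
    smul_apply, one_apply_eq_self, map_add,
    map_smul, x1_ez hq hx, x1s_ez hq hx, x0_ez hq hx, x0s_ez hq hx]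
  rw [show m + 1 - 1 = m by ring, show m - 1 - 1 = m - 2 by ring, show m + 1 + 1 = m + 2 by ring,
    show j + 1 - 1 = j by ring, show m - 1 + 1 = m by ring, show j - 1 + 1 = j by ring]
  have h1 := sw_sq hq (show 0 ≤ j + 1 by omega)
  have h0 := sw_sq hq hj
  have h2 := rc_sq hc
  rw [tw_add hq] at *
  rw [← h2]
  match_scalars
  · linear_combination (rc c ^ 2) * h1 + h0
  · ring
  · ring


lemma sw_mul (hq : 1 < q) {j : ℤ} (hj : 0 ≤ j) :
    sw q j * sw q (j - 1) ^ 2 = sw q j * (1 - tw q (j - 1) ^ 2) := by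
  rcases hj.eq_or_lt with h | h
  · rw [← h]; simp [sw_zero]
  · rw [sw_sq hq (show 0 ≤ j - 1 by omega)]

lemma tw_shift (hq : 1 < q) (j : ℤ) :
    tw q (j - 1) = tw q (j - 2) * tw q 1 ∧ tw q j = tw q (j - 2) * tw q 1 ^ 2 ∧
    tw q (j + 1) = tw q (j - 2) * tw q 1 ^ 3 ∧ tw q (j + 2) = tw q (j - 2) * tw q 1 ^ 4 ∧
    tw q (j + 3) = tw q (j - 2) * tw q 1 ^ 5 := by
  have h : ∀ i : ℤ, tw q (i + 1) = tw q i * tw q 1 := fun i => tw_add hq i 1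
  have h1 := h (j - 2)
  have h2 := h (j - 1)
  have h3 := h j
  have h4 := h (j + 1)
  have h5 := h (j + 2)
  rw [show j - 2 + 1 = j - 1 by ring] at h1
  rw [show j - 1 + 1 = j by ring] at h2
  rw [show j + 1 + 1 = j + 2 by ring] at h4
  rw [show j + 2 + 1 = j + 3 by ring] at h5
  refine ⟨h1, ?_, ?_, ?_, ?_⟩
  · rw [h2, h1]; ring
  · rw [h3, h2, h1]; ring
  · rw [h4, h3, h2, h1]; ring
  · rw [h5, h4, h3, h2, h1]; ring

lemma idx (m : ℤ) : m - 2 + 2 = m ∧ m + 2 - 2 = m ∧ m - 1 + 1 = m ∧ m + 1 - 1 = m ∧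
    m - 1 + 2 = m + 1 ∧ m + 1 + 1 = m + 2 ∧ m + 1 + 2 = m + 3 ∧ m + 2 + 1 = m + 3 ∧
    m + 2 - 1 = m + 1 ∧ m - 2 + 1 = m - 1 ∧ m + 2 + 2 = m + 4 ∧ m - 2 - 2 = m - 4 ∧
    m - 1 - 1 = m - 2 ∧ m - 1 - 2 = m - 3 ∧ m - 2 - 1 = m - 3 ∧ m + 1 - 2 = m - 1 := by
  refine ⟨?_, ?_, ?_, ?_, ?_, ?_, ?_, ?_, ?_, ?_, ?_, ?_, ?_, ?_, ?_, ?_⟩ <;> ring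

set_option linter.unusedSimpArgs false

lemma rel_AB (hq : 1 < q) (hc : 0 < c) (hx : IsXPair q c x) :
    opA c x * opB x = (tw q 1 ^ 2) • (opB x * opA c x) := by
  apply clm_ext_ez
  intro m j hj
  simp only [mul_apply_eq_comp, add_apply, sub_apply, one_apply_eq_self,
    smul_apply, opA_ez hq hc hx, opB_ez hq hc hx, opBs_ez hq hc hx, map_add, map_sub,
    map_smul, idx m, idx j]
  have h0 := sw_sq hq hj
  have h1 := sw_sq hq (show 0 ≤ j + 1 by omega)
  have h2 := sw_sq hq (show 0 ≤ j + 2 by omega)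
  have h3 := sw_mul hq hj
  obtain ⟨t1, t2, t3, t4, t5⟩ := tw_shift hq j
  rw [t1] at h3
  rw [t2] at h0
  rw [t3] at h1
  rw [t4] at h2
  simp only [t1, t2, t3, t4, t5]
  rw [← rc_sq hc]
  clear t1 t2 t3 t4 t5
  generalize tw q (j - 2) = T at *
  generalize tw q 1 = u at *
  generalize sw q (j - 1) = s' at *
  generalize sw q j = s0 at *
  generalize sw q (j + 1) = s1 at *
  generalize sw q (j + 2) = s2 at *
  generalize sw q (j + 3) = s3 at *
  generalize rc c = r at *
  clear hj hq hc hx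
  match_scalars <;> grind

lemma rel_BB (hq : 1 < q) (hc : 0 < c) (hx : IsXPair q c x) :
    opB x * star (opB x) =
      (c : ℂ) • 1 + (1 - (c : ℂ)) • opA c x - opA c x * opA c x := by
  apply clm_ext_ez
  intro m j hj
  simp only [mul_apply_eq_comp, add_apply, sub_apply, one_apply_eq_self,
    smul_apply, opA_ez hq hc hx, opB_ez hq hc hx, opBs_ez hq hc hx, map_add, map_sub,
    map_smul, idx m, idx j]
  have h0 := sw_sq hq hj
  have h1 := sw_sq hq (show 0 ≤ j + 1 by omega)
  have h2 := sw_sq hq (show 0 ≤ j + 2 by omega)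
  have h3 := sw_mul hq hj
  obtain ⟨t1, t2, t3, t4, t5⟩ := tw_shift hq j
  rw [t1] at h3
  rw [t2] at h0
  rw [t3] at h1
  rw [t4] at h2
  simp only [t1, t2, t3, t4, t5]
  rw [← rc_sq hc]
  clear t1 t2 t3 t4 t5
  generalize tw q (j - 2) = T at *
  generalize tw q 1 = u at *
  generalize sw q (j - 1) = s' at *
  generalize sw q j = s0 at *
  generalize sw q (j + 1) = s1 at *
  generalize sw q (j + 2) = s2 at *
  generalize sw q (j + 3) = s3 at *
  generalize rc c = r at *
  clear hj hq hc hx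
  match_scalars <;> grind

lemma rel_BsB (hq : 1 < q) (hc : 0 < c) (hx : IsXPair q c x) :
    star (opB x) * opB x =
      (c : ℂ) • 1 + (tw q 1 ^ 2 * (1 - (c : ℂ))) • opA c x
        - (tw q 1 ^ 4) • (opA c x * opA c x) := by
  apply clm_ext_ez
  intro m j hj
  simp only [mul_apply_eq_comp, add_apply, sub_apply, one_apply_eq_self,
    smul_apply, opA_ez hq hc hx, opB_ez hq hc hx, opBs_ez hq hc hx, map_add, map_sub,
    map_smul, idx m, idx j]
  have h0 := sw_sq hq hj
  have h1 := sw_sq hq (show 0 ≤ j + 1 by omega)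
  have h2 := sw_sq hq (show 0 ≤ j + 2 by omega)
  have h3 := sw_mul hq hj
  obtain ⟨t1, t2, t3, t4, t5⟩ := tw_shift hq j
  rw [t1] at h3
  rw [t2] at h0
  rw [t3] at h1
  rw [t4] at h2
  simp only [t1, t2, t3, t4, t5]
  rw [← rc_sq hc]
  clear t1 t2 t3 t4 t5
  generalize tw q (j - 2) = T at *
  generalize tw q 1 = u at *
  generalize sw q (j - 1) = s' at *
  generalize sw q j = s0 at *
  generalize sw q (j + 1) = s1 at *
  generalize sw q (j + 2) = s2 at *
  generalize sw q (j + 3) = s3 at *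
  generalize rc c = r at *
  clear hj hq hc hx
  match_scalars <;> first
    | linear_combination ((1 - r ^ 2) ^ 2 * T ^ 2 * u ^ 6 + r ^ 2 * s2 ^ 2 + r ^ 2 * T ^ 2 * u ^ 8) * h1
        + r ^ 2 * (1 - T ^ 2 * u ^ 6) * h2 + u ^ 6 * r ^ 2 * T ^ 2 * h0
    | grind

lemma ker_family (t : ℕ → ℝ) (ht : Filter.Tendsto t Filter.atTop (nhds 0)) (ht0 : ∀ j, t j ≠ 0) :
    ∃ G : ℤ → HC, Orthonormal ℂ G ∧
      (∀ n m j, ⟪ec (m - 1) (j + 1), G n⟫_ℂ = (t j : ℂ) * ⟪ec (m + 1) j, G n⟫_ℂ) ∧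
      (∀ v : HC, (∀ m j, ⟪ec (m - 1) (j + 1), v⟫_ℂ = (t j : ℂ) * ⟪ec (m + 1) j, v⟫_ℂ) →
        (∀ n, ⟪G n, v⟫_ℂ = 0) → v = 0) := by
  set g : ℕ → ℝ := fun j => ∏ i ∈ Finset.range j, t i with hg
  have g0 : g 0 = 1 := by simp [hg]
  have gs : ∀ j, g (j + 1) = t j * g j := by
    intro j; simp [hg, Finset.prod_range_succ, mul_comm]
  have gne : ∀ j, g j ≠ 0 := fun j => Finset.prod_ne_zero_iff.2 fun i _ => ht0 i
  have gsum : Summable (fun j => ‖g j‖) := by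
    have : Summable g := by
      refine summable_of_ratio_test_tendsto_lt_one (l := 0) one_pos
        (Filter.Eventually.of_forall gne) ?_
      have h2 : (fun n => ‖g (n + 1)‖ / ‖g n‖) = fun n => ‖t n‖ := by
        ext n
        rw [gs, norm_mul, mul_div_assoc, div_self (norm_ne_zero_iff.2 (gne n)), mul_one]
      rw [h2]
      simpa using ht.norm
    exact this.norm
  have ecn : ∀ m j, ‖ec m j‖ = 1 := by
    intro m j
    simp [ec, lp.norm_single]
  have sm : ∀ n : ℤ, Summable (fun j : ℕ => (g j : ℂ) • ec (n - 2 * j) j) := by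
    intro n
    apply Summable.of_norm
    simpa only [norm_smul, ecn, mul_one, Complex.norm_real] using gsum
  let F : ℤ → HC := fun n => ∑' j : ℕ, (g j : ℂ) • ec (n - 2 * j) j
  have Finner : ∀ n (v : HC), HasSum (fun j : ℕ => (g j : ℂ) * ⟪ec (n - 2 * j) j, v⟫_ℂ) ⟪F n, v⟫_ℂ := by
    intro n v
    have h1 := ((sm n).hasSum.mapL (innerSL ℂ v)).star
    simpa [inner_smul_right, F] using h1
  have Fec : ∀ n m j, ⟪ec m j, F n⟫_ℂ = if m + 2 * j = n then (g j : ℂ) else 0 := by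
    intro n m j
    rw [← inner_conj_symm, ← (Finner n (ec m j)).tsum_eq, tsum_eq_single j]
    · rw [inner_ec_ec]
      by_cases h : m + 2 * j = n
      · simp [h, show n - 2 * (j : ℤ) = m by omega]
      · simp [h, show ¬ (n - 2 * (j : ℤ) = m) by omega]
    · intro j' hj'
      simp [inner_ec_ec, hj']
  have gsq : Summable (fun j => g j ^ 2) := by
    have h1 := (Finner 0 (F 0)).summable
    rw [← Complex.summable_ofReal]
    refine h1.congr fun j => ?_
    rw [Fec]
    simp [sq]
  have Npos : 0 < ∑' j, g j ^ 2 :=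
    gsq.tsum_pos (fun j => sq_nonneg _) 0 (by simp [g0])
  have key : ∀ n (v : HC) (a : ℂ), (∀ j : ℕ, ⟪ec (n - 2 * j) j, v⟫_ℂ = g j * a) →
      ⟪F n, v⟫_ℂ = ((∑' j, g j ^ 2 : ℝ) : ℂ) * a := by
    intro n v a h
    rw [← (Finner n v).tsum_eq, Complex.ofReal_tsum, ← tsum_mul_right]
    congr 1
    ext j
    rw [h]; push_cast; ring
  set N := ∑' j, g j ^ 2 with hN
  refine ⟨fun n => ((Real.sqrt N)⁻¹ : ℂ) • F n, ?_, ?_, ?_⟩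
  · rw [orthonormal_iff_ite]
    intro n n'
    rw [inner_smul_left, inner_smul_right]
    rw [key n (F n') (if n = n' then 1 else 0)]
    · split_ifs
      · have : (Real.sqrt N : ℂ) ^ 2 = N := by
          rw [← Complex.ofReal_pow, Real.sq_sqrt Npos.le]
        have h2 : (Real.sqrt N : ℂ) ≠ 0 := by exact_mod_cast (Real.sqrt_pos.2 Npos).ne'
        simp only [map_inv₀, Complex.conj_ofReal, ← this]
        field_simp
      · simp
    · intro j
      rw [Fec]
      simp
  · intro n m j
    rw [inner_smul_right, inner_smul_right, Fec, Fec, gs]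
    have : (m - 1 + 2 * ((j + 1 : ℕ) : ℤ) = n) ↔ (m + 1 + 2 * (j : ℤ) = n) := by push_cast; omega
    simp only [this]
    split_ifs
    · push_cast; ring
    · simp
  · intro v hv hG
    have h1 : ∀ (j : ℕ) n, ⟪ec (n - 2 * j) j, v⟫_ℂ = g j * ⟪ec n 0, v⟫_ℂ := by
      intro j
      induction j with
      | zero => intro n; simp [g0]
      | succ k ih =>
        intro n
        have := hv (n - 2 * k - 1) k
        rw [show n - 2 * (k : ℤ) - 1 - 1 = n - 2 * ((k + 1 : ℕ) : ℤ) by push_cast; ring,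
          show n - 2 * (k : ℤ) - 1 + 1 = n - 2 * k by ring] at this
        rw [this, ih, gs]; push_cast; ring
    have h2 : ∀ n, ⟪ec n 0, v⟫_ℂ = 0 := by
      intro n
      have h3 := hG n
      rw [inner_smul_left, key n v _ (fun j => h1 j n)] at h3
      have h2 : (Real.sqrt N : ℂ) ≠ 0 := by exact_mod_cast (Real.sqrt_pos.2 Npos).ne'
      have h4 : (N : ℂ) ≠ 0 := by exact_mod_cast Npos.ne'
      simpa [h2, h4] using h3
    apply hc_ext
    intro m j
    have := h1 j (m + 2 * j)
    rw [h2, show m + 2 * (j : ℤ) - 2 * j = m by ring] at this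
    rw [this]; simp

lemma ker_A (hq : 1 < q) (hc : 0 < c) (hx : IsXPair q c x) (v : HC) (hv : opA c x v = 0) :
    v = 0 := by
  have hu0 : 0 < q⁻¹ := by positivity
  have hu1 : q⁻¹ < 1 := inv_lt_one_of_one_lt₀ hq
  have tw1 : tw q 1 = ((q⁻¹ : ℝ) : ℂ) := by simp [tw]
  have hAB' : star (opB x) * opA c x = (tw q 1 ^ 2) • (opA c x * star (opB x)) := by
    have := congrArg star (rel_AB hq hc hx)
    rw [star_smul, star_mul, star_mul, opA_star] at this
    rw [this]
    congr 1
    simp [star_tw]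
  have hker : ∀ w, opA c x w = 0 → opA c x (star (opB x) w) = 0 := by
    intro w hw
    have := congrArg (fun T => T w) hAB'
    simp only [mul_apply_eq_comp, smul_apply, hw, map_zero] at this
    have h2 := smul_eq_zero.1 this.symm
    exact h2.resolve_left (pow_ne_zero _ (tw_ne hq 1))
  have hBB : ∀ w, opA c x w = 0 → opB x (star (opB x) w) = (c : ℂ) • w := by
    intro w hw
    have := congrArg (fun T => T w) (rel_BB hq hc hx)
    simpa only [mul_apply_eq_comp, smul_apply, add_apply, sub_apply, one_apply_eq_self, hw,
      map_zero, smul_zero, add_zero, sub_zero] using this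
  have hnorm : ∀ w, opA c x w = 0 → ‖star (opB x) w‖ = Real.sqrt c * ‖w‖ := by
    intro w hw
    have h1 : ⟪star (opB x) w, star (opB x) w⟫_ℂ = (c : ℂ) * ⟪w, w⟫_ℂ := by
      rw [star_inner', hBB w hw, inner_smul_right]
    rw [inner_self_eq_norm_sq_to_K, inner_self_eq_norm_sq_to_K] at h1
    have h2 : ‖star (opB x) w‖ ^ 2 = c * ‖w‖ ^ 2 := by
      apply Complex.ofReal_injective
      push_cast
      exact h1
    have h3 : ‖star (opB x) w‖ ^ 2 = (Real.sqrt c * ‖w‖) ^ 2 := by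
      rw [h2, mul_pow, Real.sq_sqrt hc.le]
    exact (pow_left_inj₀ (norm_nonneg _) (by positivity) two_ne_zero).1 h3
  have hbound : ∀ (n : ℕ) (w : HC), opA c x w = 0 → ∀ m : ℤ,
      ‖⟪ez m 0, w⟫_ℂ‖ ≤ q⁻¹ ^ n * ‖w‖ := by
    intro n
    induction n with
    | zero =>
      intro w hw m
      have h1 := norm_inner_le_norm (𝕜 := ℂ) (ez m 0) w
      have h2 : ‖ez m 0‖ = 1 := by simp [ez, ec, lp.norm_single]
      rw [h2] at h1
      simpa using h1
    | succ n ih =>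
      intro w hw m
      have h1 : (c : ℂ) * ⟪ez m 0, w⟫_ℂ = (-(rc c * tw q 1)) * ⟪ez (m - 2) 0, star (opB x) w⟫_ℂ := by
        rw [← inner_smul_right, ← hBB w hw, ← star_inner', opBs_ez hq hc hx]
        simp [sw_zero, inner_smul_left, star_rc, star_tw, show tw q 0 = 1 by simp [tw]]
      have h2 := congrArg norm h1
      have h3 := ih _ (hker w hw) (m - 2)
      rw [hnorm w hw] at h3
      rw [norm_mul, norm_mul, norm_neg, norm_mul, tw1] at h2
      simp only [rc, Complex.norm_real, Real.norm_eq_abs, abs_of_pos hc, abs_of_pos hu0,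
        abs_of_nonneg (Real.sqrt_nonneg c)] at h2
      have h4 : c * ‖⟪ez m 0, w⟫_ℂ‖ ≤ c * (q⁻¹ ^ (n + 1) * ‖w‖) := by
        rw [h2]
        calc Real.sqrt c * q⁻¹ * ‖⟪ez (m - 2) 0, star (opB x) w⟫_ℂ‖
            ≤ Real.sqrt c * q⁻¹ * (q⁻¹ ^ n * (Real.sqrt c * ‖w‖)) := by gcongr
          _ = Real.sqrt c ^ 2 * (q⁻¹ ^ (n + 1) * ‖w‖) := by ring
          _ = _ := by rw [Real.sq_sqrt hc.le]
      exact le_of_mul_le_mul_left h4 hc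
  have hzero : ∀ m : ℤ, ⟪ez m 0, v⟫_ℂ = 0 := by
    intro m
    have h1 : Filter.Tendsto (fun n : ℕ => q⁻¹ ^ n * ‖v‖) Filter.atTop (nhds (0 * ‖v‖)) :=
      (tendsto_pow_atTop_nhds_zero_of_lt_one hu0.le hu1).mul_const _
    have h2 := ge_of_tendsto' h1 (fun n => hbound n v hv m)
    rw [zero_mul] at h2
    exact norm_le_zero_iff.1 h2
  have hall : ∀ (j : ℕ), ∀ k : ℤ, k ≤ j → ∀ m : ℤ, ⟪ez m k, v⟫_ℂ = 0 := by
    intro j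
    induction j with
    | zero =>
      intro k hk m
      rcases (show k ≤ 0 by simpa using hk).eq_or_lt with h | h
      · rw [h]; exact hzero m
      · rw [ez_neg _ h]; simp
    | succ j ih =>
      intro k hk m
      rcases hk.eq_or_lt with h | h
      · have h1 : ⟪opA c x (ez (m + 2) j), v⟫_ℂ = 0 := by
          rw [← opA_star, star_inner', hv]; simp
        rw [opA_ez hq hc hx, inner_add_left, inner_add_left, inner_smul_left, inner_smul_left,
          inner_smul_left, ih j le_rfl, ih (j - 1) (by omega)] at h1
        simp only [mul_zero, zero_add, mul_eq_zero, map_mul, star_rc, star_tw, star_sw, rc_ne hc,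
          tw_ne hq, sw_ne hq (show (0:ℤ) < j + 1 by omega), false_or] at h1
        rw [h]
        simpa using h1
      · exact ih k (by push_cast at h; omega) m
  apply hc_ext
  intro m j
  rw [← ez_nat, hall j j le_rfl]; simp

lemma polar_abs {M : Type*} [CStarAlgebra M] [PartialOrder M] [StarOrderedRing M] (A B : M)
    (c u : ℝ) (hc : 0 < c) (hu0 : 0 < u) (hu1 : u < 1) (hA : star A = A)
    (hBB : B * star B = (c : ℂ) • 1 + (1 - (c : ℂ)) • A - A * A)
    (hBsB : star B * B = (c : ℂ) • 1 + ((u : ℂ) ^ 2 * (1 - (c : ℂ))) • A - ((u : ℂ) ^ 4) • (A * A)) :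
    ∃ h k : M, h * k = 1 ∧ star h = h ∧ h * (star B * B) * h = 1 ∧ Commute A h ∧
      ∀ S : StarSubalgebra ℂ M, IsClosed (S : Set M) → star B * B ∈ S → h ∈ S ∧ k ∈ S := by
  set N := star B * B with hN
  have hNsa : IsSelfAdjoint N := IsSelfAdjoint.star_mul_self B
  set δ : ℝ := c * (1 - u ^ 2) with hδ
  have hu2 : 0 < 1 - u ^ 2 := by nlinarith
  have hδ0 : 0 < δ := by positivity
  have hNlb : algebraMap ℝ M δ ≤ N := by
    have e : N = algebraMap ℝ M δ + (u ^ 2) • (B * star B) + (u ^ 2 * (1 - u ^ 2)) • (star A * A) := by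
      rw [hBsB, hBB, hA, Algebra.algebraMap_eq_smul_one, hδ]
      simp only [← Complex.coe_smul]
      push_cast
      module
    rw [e, add_assoc]
    apply le_add_of_nonneg_right
    apply add_nonneg
    · exact smul_nonneg (by positivity) (mul_star_self_nonneg B)
    · exact smul_nonneg (by positivity) (star_mul_self_nonneg A)
  have hsp : ∀ t ∈ spectrum ℝ N, δ ≤ t := (algebraMap_le_iff_le_spectrum hNsa).1 hNlb
  have hc1 : ContinuousOn (fun t : ℝ => (Real.sqrt t)⁻¹) (spectrum ℝ N) := by
    apply ContinuousOn.inv₀ (Real.continuous_sqrt.continuousOn)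
    intro t ht
    exact (Real.sqrt_pos.2 (hδ0.trans_le (hsp t ht))).ne'
  have hc2 : ContinuousOn (fun t : ℝ => Real.sqrt t) (spectrum ℝ N) :=
    Real.continuous_sqrt.continuousOn
  have hcomm : Commute N A := by
    rw [hBsB]
    apply Commute.sub_left
    · apply Commute.add_left
      · exact (Commute.one_left A).smul_left _
      · exact (Commute.refl A).smul_left _
    · exact ((Commute.refl A).mul_left (Commute.refl A)).smul_left _
  refine ⟨cfc (fun t : ℝ => (Real.sqrt t)⁻¹) N, cfc (fun t : ℝ => Real.sqrt t) N, ?_, ?_, ?_, ?_, ?_⟩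
  · rw [← cfc_mul _ _ N hc1 hc2, ← cfc_one ℝ N]
    apply cfc_congr
    intro t ht
    exact inv_mul_cancel₀ (Real.sqrt_pos.2 (hδ0.trans_le (hsp t ht))).ne'
  · exact (cfc_predicate (fun t : ℝ => (Real.sqrt t)⁻¹) N : IsSelfAdjoint _).star_eq
  · have hid : N = cfc (fun t : ℝ => t) N := (cfc_id' ℝ N hNsa).symm
    nth_rw 2 [hid]
    have hc3 : ContinuousOn (fun t : ℝ => t) (spectrum ℝ N) := continuousOn_id
    have hc4 : ContinuousOn (fun t : ℝ => (Real.sqrt t)⁻¹ * t) (spectrum ℝ N) := hc1.mul hc3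
    rw [← cfc_mul _ _ N hc1 hc3, ← cfc_mul _ _ N hc4 hc1,
      ← cfc_one ℝ N]
    apply cfc_congr
    intro t ht
    have h0 : 0 < t := hδ0.trans_le (hsp t ht)
    have h1 := (Real.sqrt_pos.2 h0).ne'
    have h2 := Real.mul_self_sqrt h0.le
    change (Real.sqrt t)⁻¹ * t * (Real.sqrt t)⁻¹ = 1
    nth_rw 2 [← h2]
    field_simp
  · exact (hcomm.cfc_real _).symm
  · intro S hS hNS
    have := hS
    exact ⟨cfc_mem (𝕜' := ℂ) _ hNS, cfc_mem (𝕜' := ℂ) _ hNS⟩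

lemma tendsto_weight (hq : 1 < q) :
    Filter.Tendsto (fun j : ℕ => Real.sqrt (1 - q ^ (-2 * ((j : ℤ) + 1)))) Filter.atTop (nhds 1) := by
  have hu0 : 0 < q⁻¹ := by positivity
  have hu1 : q⁻¹ < 1 := inv_lt_one_of_one_lt₀ hq
  have h1 : Filter.Tendsto (fun j : ℕ => (q⁻¹ ^ 2) ^ (j + 1)) Filter.atTop (nhds 0) :=
    (Filter.tendsto_add_atTop_iff_nat 1).2
      (tendsto_pow_atTop_nhds_zero_of_lt_one (by positivity) (by nlinarith))
  have h2 : (fun j : ℕ => q ^ (-2 * ((j : ℤ) + 1))) = fun j : ℕ => (q⁻¹ ^ 2) ^ (j + 1) := by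
    ext j
    rw [← pow_mul, inv_pow, ← zpow_natCast, ← zpow_neg]
    congr 1
  rw [← h2] at h1
  have h3 := (Real.continuous_sqrt.tendsto _).comp ((tendsto_const_nhds (x := (1:ℝ))).sub h1)
  simpa [Function.comp_def] using h3

lemma tendsto_tw (hq : 1 < q) :
    Filter.Tendsto (fun j : ℕ => q ^ (-(j : ℤ))) Filter.atTop (nhds 0) := by
  have hu0 : 0 < q⁻¹ := by positivity
  have hu1 : q⁻¹ < 1 := inv_lt_one_of_one_lt₀ hq
  simpa using tendsto_pow_atTop_nhds_zero_of_lt_one hu0.le hu1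

lemma weight_pos (hq : 1 < q) (j : ℕ) : 0 < Real.sqrt (1 - q ^ (-2 * ((j : ℤ) + 1))) := by
  apply Real.sqrt_pos.2
  have h1 : q ^ (-2 * ((j : ℤ) + 1)) < 1 := zpow_lt_one_of_neg₀ hq (by omega)
  linarith

lemma fam0 (hq : 1 < q) (hc : 0 < c) (hx : IsXPair q c x) :
    ∃ G : ℤ → HC, Orthonormal ℂ G ∧ (∀ n, x 0 (G n) = 0) ∧
      (∀ v, x 0 v = 0 → (∀ n, ⟪G n, v⟫_ℂ = 0) → v = 0) := by
  set t : ℕ → ℝ := fun j => -q ^ (-(j : ℤ)) /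
    (Real.sqrt c * Real.sqrt (1 - q ^ (-2 * ((j : ℤ) + 1)))) with ht
  have hsc := Real.sqrt_pos.2 hc
  have h1 : Filter.Tendsto t Filter.atTop (nhds 0) := by
    have := (tendsto_tw hq).neg.div ((tendsto_weight hq).const_mul (Real.sqrt c))
      (by simpa using hsc.ne')
    rw [neg_zero, zero_div] at this
    exact this
  have h2 : ∀ j, t j ≠ 0 := by
    intro j
    have := weight_pos hq j
    have h3 : q ^ (-(j : ℤ)) ≠ 0 := zpow_ne_zero _ (by linarith)
    exact div_ne_zero (neg_ne_zero.2 h3) (by positivity)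
  obtain ⟨G, hG, hG1, hG2⟩ := ker_family t h1 h2
  have tdef : ∀ j : ℕ, (t j : ℂ) = - tw q j / (rc c * sw q (j + 1)) := by
    intro j
    simp only [ht, tw, rc, sw]
    push_cast
    rfl
  have key : ∀ v : HC, x 0 v = 0 ↔
      ∀ m j, ⟪ec (m - 1) (j + 1), v⟫_ℂ = (t j : ℂ) * ⟪ec (m + 1) j, v⟫_ℂ := by
    intro v
    have h3 : ∀ (m : ℤ) (j : ℕ), ⟪ec m j, x 0 v⟫_ℂ = rc c * sw q (j + 1) * ⟪ec (m - 1) (j + 1), v⟫_ℂ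
        + tw q j * ⟪ec (m + 1) j, v⟫_ℂ := by
      intro m j
      rw [← star_inner', ← ez_nat, x0s_ez hq hx, inner_add_left, inner_smul_left, inner_smul_left,
        ← ez_nat, ← ez_nat]
      simp [star_tw, star_sw, star_rc]
    have h4 : ∀ j : ℕ, sw q (j + 1) ≠ 0 := fun j => sw_ne hq (by omega)
    have h5 := rc_ne hc
    constructor
    · intro h m j
      have h6 := h3 m j
      rw [h, inner_zero_right] at h6
      rw [tdef, div_mul_eq_mul_div, eq_div_iff (mul_ne_zero h5 (h4 j))]
      linear_combination -h6
    · intro h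
      apply hc_ext
      intro m j
      rw [h3, h, tdef, inner_zero_right]
      have := h4 j
      field_simp
      ring
  refine ⟨G, hG, fun n => (key _).2 (hG1 n), fun v hv => hG2 v ((key v).1 hv)⟩

lemma fam1 (hq : 1 < q) (hc : 0 < c) (hx : IsXPair q c x) :
    ∃ G : ℤ → HC, Orthonormal ℂ G ∧ (∀ n, star (x 1) (G n) = 0) ∧
      (∀ v, star (x 1) v = 0 → (∀ n, ⟪G n, v⟫_ℂ = 0) → v = 0) := by
  set t : ℕ → ℝ := fun j => Real.sqrt c * q ^ (-((j + 1 : ℕ) : ℤ)) /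
    (Real.sqrt (1 - q ^ (-2 * ((j : ℤ) + 1)))) with ht
  have hsc := Real.sqrt_pos.2 hc
  have h1 : Filter.Tendsto t Filter.atTop (nhds 0) := by
    have := (((Filter.tendsto_add_atTop_iff_nat 1).2 (tendsto_tw hq)).const_mul
      (Real.sqrt c)).div (tendsto_weight hq) (by simp)
    rw [mul_zero, zero_div] at this
    exact this
  have h2 : ∀ j, t j ≠ 0 := by
    intro j
    have := weight_pos hq j
    have h3 : q ^ (-((j + 1 : ℕ) : ℤ)) ≠ 0 := zpow_ne_zero _ (by linarith)
    exact div_ne_zero (mul_ne_zero hsc.ne' h3) (by positivity)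
  obtain ⟨G, hG, hG1, hG2⟩ := ker_family t h1 h2
  have tdef : ∀ j : ℕ, (t j : ℂ) = rc c * tw q (j + 1) / sw q (j + 1) := by
    intro j
    simp only [ht, tw, rc, sw]
    push_cast
    rfl
  have key : ∀ v : HC, star (x 1) v = 0 ↔
      ∀ m j, ⟪ec (m - 1) (j + 1), v⟫_ℂ = (t j : ℂ) * ⟪ec (m + 1) j, v⟫_ℂ := by
    intro v
    have h3 : ∀ (m : ℤ) (j : ℕ), ⟪ec m j, star (x 1) v⟫_ℂ = sw q (j + 1) * ⟪ec (m - 1) (j + 1), v⟫_ℂ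
        - rc c * tw q (j + 1) * ⟪ec (m + 1) j, v⟫_ℂ := by
      intro m j
      rw [star_inner, ← ez_nat, x1_ez hq hx, inner_add_left, inner_smul_left, inner_smul_left,
        ← ez_nat, ← ez_nat]
      simp [star_tw, star_sw, star_rc]
      ring
    have h4 : ∀ j : ℕ, sw q (j + 1) ≠ 0 := fun j => sw_ne hq (by omega)
    constructor
    · intro h m j
      have h6 := h3 m j
      rw [h, inner_zero_right] at h6
      rw [tdef, div_mul_eq_mul_div, eq_div_iff (h4 j)]
      linear_combination -h6
    · intro h
      apply hc_ext
      intro m j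
      rw [h3, h, tdef, inner_zero_right]
      have := h4 j
      field_simp
      ring
  refine ⟨G, hG, fun n => (key _).2 (hG1 n), fun v hv => hG2 v ((key v).1 hv)⟩

lemma wold_basis {ι : Type} (V A : HC →L[ℂ] HC) (u : ℝ) (hu0 : 0 < u) (hu1 : u < 1)
    (b0 : ι → HC) (hb0 : Orthonormal ℂ b0)
    (hVV : star V * V = 1) (hVb : ∀ i, star V (b0 i) = 0)
    (hcomp : ∀ w, (∀ i, ⟪b0 i, w⟫_ℂ = 0) → V (star V w) = w)
    (hAV : A * V = ((u : ℂ) ^ 2) • (V * A)) (hker : ∀ v, A v = 0 → v = 0) :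
    ∃ b : HilbertBasis (ι × ℕ) ℂ HC, ∀ i k, b (i, k) = (V ^ k) (b0 i) := by
  have hVV' : ∀ w, star V (V w) = w := by
    intro w
    have := congrArg (fun T => T w) hVV
    simpa only [mul_apply_eq_comp, one_apply_eq_self] using this
  have hiso : ∀ v w, ⟪V v, V w⟫_ℂ = ⟪v, w⟫_ℂ := by
    intro v w
    rw [← star_inner, hVV']
  have hnorm : ∀ v, ‖V v‖ = ‖v‖ := by
    intro v
    rw [@norm_eq_sqrt_re_inner ℂ, @norm_eq_sqrt_re_inner ℂ, hiso]
  have hpow : ∀ (k : ℕ) (v : HC), (V ^ (k + 1)) v = V ((V ^ k) v) := by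
    intro k v
    rw [pow_succ', mul_apply_eq_comp]
  have hz : ∀ i w, ⟪b0 i, V w⟫_ℂ = 0 := by
    intro i w
    rw [← star_inner', hVb, inner_zero_left]
  have horth : ∀ (k l : ℕ) (i j : ι), ⟪(V ^ k) (b0 i), (V ^ l) (b0 j)⟫_ℂ =
      if k = l then ⟪b0 i, b0 j⟫_ℂ else 0 := by
    intro k
    induction k with
    | zero =>
      intro l i j
      cases l with
      | zero => simp
      | succ l =>
        rw [hpow]
        simp only [pow_zero, one_apply_eq_self, hz]
        simp
    | succ k ih =>
      intro l i j
      cases l with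
      | zero =>
        rw [hpow, ← inner_conj_symm]
        simp only [pow_zero, one_apply_eq_self, hz]
        simp
      | succ l =>
        rw [hpow, hpow, hiso, ih]
        simp
  have hon : Orthonormal ℂ (fun p : ι × ℕ => (V ^ p.2) (b0 p.1)) := by
    classical
    rw [orthonormal_iff_ite] at hb0 ⊢
    rintro ⟨i, k⟩ ⟨j, l⟩
    rw [horth, hb0]
    simp only [Prod.mk.injEq]
    by_cases h1 : k = l <;> by_cases h2 : i = j <;> simp [h1, h2]
  have hbot : (Submodule.span ℂ (Set.range (fun p : ι × ℕ => (V ^ p.2) (b0 p.1))))ᗮ = ⊥ := by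
    rw [Submodule.eq_bot_iff]
    intro v hv
    have h1 : ∀ i k, ⟪(V ^ k) (b0 i), v⟫_ℂ = 0 := by
      intro i k
      exact (Submodule.mem_orthogonal _ _).1 hv _ (Submodule.subset_span ⟨(i, k), rfl⟩)
    have h2 : ∀ k : ℕ, ∃ w, (V ^ k) w = v := by
      intro k
      induction k with
      | zero => exact ⟨v, by simp⟩
      | succ k ih =>
        obtain ⟨w, hw⟩ := ih
        refine ⟨star V w, ?_⟩
        rw [pow_succ, mul_apply_eq_comp, hcomp w, hw]
        intro i
        have h3 := h1 i k
        rw [← hw] at h3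
        have h4 : ∀ (n : ℕ) (y z : HC), ⟪(V ^ n) y, (V ^ n) z⟫_ℂ = ⟪y, z⟫_ℂ := by
          intro n
          induction n with
          | zero => simp
          | succ n ih => intro y z; rw [hpow, hpow, hiso, ih]
        rwa [h4] at h3
    have h5 : ∀ (k : ℕ) (w : HC), ‖(V ^ k) w‖ = ‖w‖ := by
      intro k
      induction k with
      | zero => simp
      | succ k ih => intro w; rw [hpow, hnorm, ih]
    have h6 : ∀ (k : ℕ) (w : HC), A ((V ^ k) w) = (((u : ℂ) ^ 2) ^ k) • (V ^ k) (A w) := by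
      intro k
      induction k with
      | zero => simp
      | succ k ih =>
        intro w
        have h7 := congrArg (fun T => T ((V ^ k) w)) hAV
        simp only [mul_apply_eq_comp, smul_apply] at h7
        rw [hpow, h7, ih, map_smul, smul_smul, hpow, pow_succ' ((u : ℂ) ^ 2)]
    have h7 : ∀ k : ℕ, ‖A v‖ ≤ (u ^ 2) ^ k * (‖A‖ * ‖v‖) := by
      intro k
      obtain ⟨w, hw⟩ := h2 k
      rw [← hw, h6, norm_smul, h5, h5]
      have : ‖((u : ℂ) ^ 2) ^ k‖ = (u ^ 2) ^ k := by
        rw [norm_pow, norm_pow, Complex.norm_real, Real.norm_of_nonneg hu0.le]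
      rw [this]
      gcongr
      exact A.le_opNorm w
    have h8 : Filter.Tendsto (fun k : ℕ => (u ^ 2) ^ k * (‖A‖ * ‖v‖)) Filter.atTop
        (nhds (0 * (‖A‖ * ‖v‖))) :=
      (tendsto_pow_atTop_nhds_zero_of_lt_one (by positivity) (by nlinarith)).mul_const _
    have h9 := ge_of_tendsto' h8 h7
    rw [zero_mul] at h9
    exact hker v (norm_le_zero_iff.1 h9)
  refine ⟨HilbertBasis.mkOfOrthogonalEqBot hon hbot, ?_⟩
  intro i k
  rw [HilbertBasis.coe_mkOfOrthogonalEqBot]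

lemma mem_of_shift {M : Type*} [CStarAlgebra M] (h2 : ‖(1 : M)‖ ≤ 1)
    (T : StarSubalgebra ℂ M) (hT : IsClosed (T : Set M)) (V A : M) (u : ℝ) (hu0 : 0 < u) (hu1 : u < 1) (hVV : star V * V = 1)
    (hV : V ∈ T) (hA : A - ((u : ℂ) ^ 2) • (V * A * star V) ∈ T) : A ∈ T := by
  have hVn : ‖V‖ ≤ 1 := by
    have h1 : ‖star V * V‖ = ‖V‖ * ‖V‖ := CStarRing.norm_star_mul_self
    rw [hVV] at h1
    nlinarith [norm_nonneg V]
  have hind : ∀ k : ℕ, ∃ R, ‖R‖ ≤ (u ^ 2) ^ k * ‖A‖ ∧ A - R ∈ T := by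
    intro k
    induction k with
    | zero => exact ⟨A, by simp, by simp [zero_mem]⟩
    | succ k ih =>
      obtain ⟨R, hR1, hR2⟩ := ih
      refine ⟨((u : ℂ) ^ 2) • (V * R * star V), ?_, ?_⟩
      · rw [norm_smul, norm_pow, Complex.norm_real, Real.norm_of_nonneg hu0.le, pow_succ' (u ^ 2), mul_assoc (u ^ 2)]
        gcongr
        refine le_trans ?_ hR1
        calc ‖V * R * star V‖ ≤ ‖V‖ * ‖R‖ * ‖star V‖ :=
              (norm_mul_le _ _).trans (by gcongr; exact norm_mul_le _ _)
          _ ≤ 1 * ‖R‖ * 1 := by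
              rw [norm_star]; gcongr
          _ = ‖R‖ := by ring
      · have h1 : A - ((u : ℂ) ^ 2) • (V * R * star V) =
            (A - ((u : ℂ) ^ 2) • (V * A * star V)) + ((u : ℂ) ^ 2) • (V * (A - R) * star V) := by
          rw [mul_sub, sub_mul, smul_sub]; abel
        rw [h1]
        exact add_mem hA (T.smul_mem (mul_mem (mul_mem hV hR2) (star_mem hV)) _)
  choose R hR1 hR2 using hind
  have h8 : Filter.Tendsto (fun k : ℕ => (u ^ 2) ^ k * ‖A‖) Filter.atTop (nhds (0 * ‖A‖)) :=
    (tendsto_pow_atTop_nhds_zero_of_lt_one (by positivity) (by nlinarith)).mul_const _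
  rw [zero_mul] at h8
  have h9 := squeeze_zero_norm hR1 h8
  have h10 : Filter.Tendsto (fun k => A - R k) Filter.atTop (nhds (A - 0)) :=
    tendsto_const_nhds.sub h9
  rw [sub_zero] at h10
  exact hT.mem_of_tendsto h10 (Filter.Eventually.of_forall hR2)

lemma model (hq : 1 < q) (hc : 0 < c) (hx : IsXPair q c x) :
    ∃ (V P : HC →L[ℂ] HC) (b : HilbertBasis ((Bool × ℤ) × ℕ) ℂ HC),
      (∀ i k, V (b (i, k)) = b (i, k + 1)) ∧
      (∀ i, P (b (i, 0)) = if i.1 then b (i, 0) else 0) ∧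
      (∀ i k, P (b (i, k + 1)) = 0) ∧
      Cqc x = (StarAlgebra.adjoin ℂ {V, P}).topologicalClosure := by
  have hu0 : 0 < q⁻¹ := by positivity
  have hu1 : q⁻¹ < 1 := inv_lt_one_of_one_lt₀ hq
  have tw1 : tw q 1 = ((q⁻¹ : ℝ) : ℂ) := by simp [tw]
  have rAB := rel_AB hq hc hx
  have rBB := rel_BB hq hc hx
  have rBsB := rel_BsB hq hc hx
  have rx1 := rel_x1 hq hc hx
  have rx0s := rel_x0s hq hc hx
  have hker := ker_A hq hc hx
  rw [tw1] at rAB rBsB rx1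
  generalize hu : q⁻¹ = u at *
  have hA := opA_star c x
  have hx0x0 : star (x 0) * x 0 = opA c x + (c : ℂ) • 1 := by simp [opA]
  have hBdef : star (x 0) * x 1 = opB x := rfl
  have hBs := opB_star x
  generalize hAe : opA c x = A at *
  generalize hBe : opB x = B at *
  have rABs : star B * A = ((u : ℂ) ^ 2) • (A * star B) := by
    have := congrArg star rAB
    rw [star_smul, star_mul, star_mul, hA] at this
    rw [this]
    congr 1
    simp
  obtain ⟨h, k, hhk, hhs, hhN, hhA, hmem⟩ := polar_abs A B c u hc hu0 hu1 hA rBB rBsB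
  have hc1 : (1 + (c : ℂ)) ≠ 0 := by
    have : (1 + c : ℝ) ≠ 0 := by positivity
    exact_mod_cast this
  have hu' : (u : ℂ) ≠ 0 := by exact_mod_cast hu0.ne'
  set V := B * h with hVdef
  have hVs : star V = h * star B := by rw [hVdef, star_mul, hhs]
  have hVV : star V * V = 1 := by
    rw [hVs, hVdef, ← hhN]; noncomm_ring
  have hAV : A * V = ((u : ℂ) ^ 2) • (V * A) := by
    rw [hVdef, ← mul_assoc, rAB, smul_mul_assoc, mul_assoc, hhA.eq, mul_assoc]
  have hks : star k * h = 1 := by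
    have := congrArg star hhk
    rwa [star_mul, hhs, star_one] at this
  have hVB : ∀ y, star V y = 0 → star B y = 0 := by
    intro y hy
    have h1 : star k * star V = star B := by rw [hVs, ← mul_assoc, hks, one_mul]
    rw [← h1, mul_apply_eq_comp, hy, map_zero]
  have hBV : ∀ y, star B y = 0 → star V y = 0 := by
    intro y hy
    rw [hVs, mul_apply_eq_comp, hy, map_zero]
  set E := 1 - V * star V with hE
  have hEs : star E = E := by simp [hE]
  have hVE : star V * E = 0 := by rw [hE, mul_sub, ← mul_assoc, hVV]; simp
  have hEV : E * V = 0 := by rw [hE, sub_mul, mul_assoc, hVV]; simp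
  set P := (1 + (c : ℂ))⁻¹ • ((A + (c : ℂ) • 1) * E) with hP
  have apl : ∀ {S T : HC →L[ℂ] HC}, S = T → ∀ w, S w = T w := fun h w => by rw [h]
  have ax0 : ∀ w, star (x 0) (x 0 w) = A w + (c : ℂ) • w := fun w => by
    simpa only [mul_apply_eq_comp, smul_apply, add_apply, one_apply_eq_self] using apl hx0x0 w
  have ax1 : ∀ w, x 0 (star (x 0) w) + x 1 (star (x 1) w) = (1 + (c : ℂ)) • w := fun w => by
    simpa only [mul_apply_eq_comp, smul_apply, add_apply, one_apply_eq_self] using apl rx0s w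
  have aBs : ∀ w, star B w = star (x 1) (x 0 w) := fun w => by
    simpa only [mul_apply_eq_comp] using apl hBs w
  obtain ⟨G, hG, hG1, hG2⟩ := fam0 hq hc hx
  obtain ⟨F, hF, hF1, hF2⟩ := fam1 hq hc hx
  have hx0F : ∀ n, x 0 (star (x 0) (F n)) = (1 + (c : ℂ)) • F n := by
    intro n
    have := ax1 (F n)
    rwa [hF1, map_zero, add_zero] at this
  have AG : ∀ n, A (G n) = -((c : ℂ) • G n) := by
    intro n
    have := ax0 (G n)
    rw [hG1, map_zero] at this
    exact eq_neg_of_add_eq_zero_left this.symm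
  have AF : ∀ n, A (star (x 0) (F n)) = star (x 0) (F n) := by
    intro n
    have := ax0 (star (x 0) (F n))
    rw [hx0F, map_smul, add_smul, one_smul] at this
    exact (add_right_cancel this).symm
  set r : ℂ := (((Real.sqrt (1 + c))⁻¹ : ℝ) : ℂ) with hr
  have hr0 : r ≠ 0 := by
    have : (Real.sqrt (1 + c))⁻¹ ≠ 0 := by positivity
    rw [hr]
    exact Complex.ofReal_ne_zero.2 this
  have hrs : (starRingEnd ℂ) r = r := Complex.conj_ofReal _
  have hrr : r * (r * (1 + (c : ℂ))) = 1 := by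
    have h1 : (Real.sqrt (1 + c))⁻¹ * ((Real.sqrt (1 + c))⁻¹ * (1 + c)) = 1 := by
      have h0 : (0 : ℝ) < 1 + c := by positivity
      have h2 := Real.mul_self_sqrt h0.le
      have h3 := (Real.sqrt_pos.2 h0).ne'
      nth_rw 3 [← h2]
      field_simp
    rw [hr]
    exact_mod_cast h1
  let b0 : Bool × ℤ → HC := fun p => if p.1 then r • star (x 0) (F p.2) else G p.2
  have b0t : ∀ n, b0 (true, n) = r • star (x 0) (F n) := fun n => by simp [b0]
  have b0f : ∀ n, b0 (false, n) = G n := fun n => by simp [b0]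
  have hb0 : Orthonormal ℂ b0 := by
    classical
    rw [orthonormal_iff_ite] at hG hF ⊢
    rintro ⟨s, n⟩ ⟨s', m⟩
    cases s <;> cases s'
    · rw [b0f, b0f, hG]; simp
    · rw [b0f, b0t, inner_smul_right, star_inner, hG1]; simp
    · rw [b0f, b0t, inner_smul_left, star_inner', hG1]; simp
    · rw [b0t, b0t, inner_smul_left, inner_smul_right, star_inner', hx0F, inner_smul_right, hF, hrs]
      by_cases hnm : n = m
      · simp only [hnm, if_true, mul_one]
        exact hrr
      · simp [hnm]
  have Bb : ∀ i, star B (b0 i) = 0 := by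
    rintro ⟨s, n⟩
    cases s
    · rw [b0f, aBs, hG1, map_zero]
    · rw [b0t, map_smul, aBs, hx0F, map_smul, hF1, smul_zero, smul_zero]
  have Vb : ∀ i, star V (b0 i) = 0 := fun i => hBV _ (Bb i)
  have aE : ∀ w, E w = w - V (star V w) := fun w => by
    simp only [hE, mul_apply_eq_comp, sub_apply, one_apply_eq_self]
  have Eb : ∀ i, E (b0 i) = b0 i := fun i => by rw [aE, Vb, map_zero, sub_zero]
  have hcomp : ∀ w, (∀ i, ⟪b0 i, w⟫_ℂ = 0) → V (star V w) = w := by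
    intro w hw
    set y := E w with hy
    have hby : ∀ i, ⟪b0 i, y⟫_ℂ = 0 := by
      intro i
      rw [hy, ← star_inner', hEs, Eb, hw]
    have hBy : star B y = 0 := by
      apply hVB
      rw [hy, ← mul_apply_eq_comp, hVE, zero_apply]
    set z := A y + (c : ℂ) • y with hz
    have hAz : A z = z := by
      have h1 := apl rBB y
      simp only [mul_apply_eq_comp, smul_apply, add_apply, sub_apply, one_apply_eq_self, hBy,
        map_zero] at h1
      rw [hz, map_add, map_smul]
      have h2 : A (A y) = (c : ℂ) • y + (1 - (c : ℂ)) • A y := (sub_eq_zero.1 h1.symm).symm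
      rw [h2]; module
    have hBz : star B z = 0 := by
      have h1 := apl rABs y
      simp only [mul_apply_eq_comp, smul_apply, hBy, map_zero, smul_zero] at h1
      rw [hz, map_add, h1, map_smul, hBy, smul_zero, add_zero]
    have hx0z : x 0 z = 0 := by
      apply hF2
      · rw [← aBs, hBz]
      · intro n
        rw [← star_inner', hz, inner_add_right, inner_smul_right, ← hA, star_inner, AF]
        have h1 := hby (true, n)
        rw [b0t, inner_smul_left, mul_eq_zero] at h1
        have h2 := h1.resolve_left (by rw [hrs]; exact hr0)
        rw [h2]; simp
    have hz0 : z = 0 := by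
      have h1 := ax0 z
      rw [hx0z, map_zero, hAz] at h1
      have h2 : (1 + (c : ℂ)) • z = 0 := by rw [h1]; module
      exact (smul_eq_zero.1 h2).resolve_left hc1
    have hx0y : x 0 y = 0 := by
      have h1 : star (x 0) (x 0 y) = 0 := by rw [ax0, ← hz, hz0]
      have h2 : ⟪x 0 y, x 0 y⟫_ℂ = 0 := by rw [← star_inner, h1, inner_zero_right]
      exact inner_self_eq_zero.1 h2
    have hy0 : y = 0 := hG2 y hx0y (fun n => by rw [← b0f]; exact hby _)
    rw [hy, aE] at hy0
    exact (sub_eq_zero.1 hy0).symm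
  obtain ⟨b, hb⟩ := wold_basis V A u hu0 hu1 b0 hb0 hVV Vb hcomp hAV hker
  have aP : ∀ w, P w = (1 + (c : ℂ))⁻¹ • (A (E w) + (c : ℂ) • E w) := fun w => by
    simp only [hP, mul_apply_eq_comp, smul_apply, add_apply, one_apply_eq_self]
  refine ⟨V, P, b, ?_, ?_, ?_, ?_⟩
  · intro i n
    rw [hb, hb, pow_succ' V n]
    rfl
  · rintro ⟨s, n⟩
    rw [hb, pow_zero, one_apply_eq_self, aP, Eb]
    cases s
    · rw [b0f, AG]; simp
    · rw [b0t, map_smul, AF]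
      simp only [if_true]
      rw [inv_smul_eq_iff₀ hc1]
      module
  · intro i n
    rw [hb, pow_succ', mul_apply_eq_comp, aP]
    have : E (V ((V ^ n) (b0 i))) = 0 := by
      rw [← mul_apply_eq_comp, hEV, zero_apply]
    rw [this]; simp
  · apply le_antisymm
    · set T := (StarAlgebra.adjoin ℂ {V, P}).topologicalClosure with hT
      have hTc : IsClosed (T : Set (HC →L[ℂ] HC)) :=
        StarSubalgebra.isClosed_topologicalClosure _
      have hVT : V ∈ T :=
        StarSubalgebra.le_topologicalClosure _ (StarAlgebra.subset_adjoin _ _ (by simp))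
      have hPT : P ∈ T :=
        StarSubalgebra.le_topologicalClosure _ (StarAlgebra.subset_adjoin _ _ (by simp))
      have hET : E ∈ T := sub_mem (one_mem T) (mul_mem hVT (star_mem hVT))
      have hAT : A ∈ T := by
        apply mem_of_shift ContinuousLinearMap.norm_id_le T hTc V A u hu0 hu1 hVV hVT
        have h1 : A - ((u : ℂ) ^ 2) • (V * A * star V) = (1 + (c : ℂ)) • P - (c : ℂ) • E := by
          rw [← smul_mul_assoc, ← hAV, hP, smul_smul, mul_inv_cancel₀ hc1, one_smul, add_mul,
            smul_mul_assoc, one_mul, add_sub_cancel_right, hE, mul_sub, mul_one, mul_assoc]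
        rw [h1]
        exact sub_mem (T.smul_mem hPT _) (T.smul_mem hET _)
      have hNT : star B * B ∈ T := by
        rw [rBsB]
        exact sub_mem (add_mem (T.smul_mem (one_mem T) _) (T.smul_mem hAT _))
          (T.smul_mem (mul_mem hAT hAT) _)
      have hBT : B ∈ T := by
        have h1 : B = V * k := by rw [hVdef, mul_assoc, hhk, mul_one]
        rw [h1]
        exact mul_mem hVT (hmem T hTc hNT).2
      refine StarSubalgebra.topologicalClosure_minimal ?_ hTc
      apply StarAlgebra.adjoin_le
      rintro _ ⟨i, j, rfl⟩
      change star (x i) * x j ∈ T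
      fin_cases i <;> fin_cases j
      · change star (x 0) * x 0 ∈ T
        rw [hx0x0]
        exact add_mem hAT (T.smul_mem (one_mem T) _)
      · exact hBdef ▸ hBT
      · exact hBs ▸ star_mem hBT
      · change star (x 1) * x 1 ∈ T
        rw [rx1]
        exact sub_mem (one_mem T) (T.smul_mem hAT _)
    · have hTc : IsClosed (Cqc x : Set (HC →L[ℂ] HC)) :=
        StarSubalgebra.isClosed_topologicalClosure _
      have hxx : ∀ i j, star (x i) * x j ∈ Cqc x := fun i j =>
        StarSubalgebra.le_topologicalClosure _ (StarAlgebra.subset_adjoin _ _ ⟨i, j, rfl⟩)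
      have hBT : B ∈ Cqc x := by rw [← hBdef]; exact hxx 0 1
      have hAT : A ∈ Cqc x := by
        have h1 : A = star (x 0) * x 0 - (c : ℂ) • 1 := by rw [hx0x0]; simp
        rw [h1]
        exact sub_mem (hxx 0 0) ((Cqc x).smul_mem (one_mem _) _)
      have hVT : V ∈ Cqc x := mul_mem hBT (hmem _ hTc (mul_mem (star_mem hBT) hBT)).1
      have hET : E ∈ Cqc x := sub_mem (one_mem _) (mul_mem hVT (star_mem hVT))
      have hPT : P ∈ Cqc x :=
        (Cqc x).smul_mem (mul_mem (add_mem hAT ((Cqc x).smul_mem (one_mem _) _)) hET) _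
      refine StarSubalgebra.topologicalClosure_minimal ?_ hTc
      apply StarAlgebra.adjoin_le
      rintro T (rfl | rfl)
      · exact hVT
      · exact hPT

lemma final_iso (V P V' P' : HC →L[ℂ] HC) (b b' : HilbertBasis ((Bool × ℤ) × ℕ) ℂ HC)
    (hV : ∀ i k, V (b (i, k)) = b (i, k + 1)) (hV' : ∀ i k, V' (b' (i, k)) = b' (i, k + 1))
    (hP0 : ∀ i, P (b (i, 0)) = if i.1 then b (i, 0) else 0)
    (hP0' : ∀ i, P' (b' (i, 0)) = if i.1 then b' (i, 0) else 0)
    (hP : ∀ i k, P (b (i, k + 1)) = 0) (hP' : ∀ i k, P' (b' (i, k + 1)) = 0) :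
    Nonempty ((StarAlgebra.adjoin ℂ {V, P}).topologicalClosure ≃⋆ₐ[ℂ]
      (StarAlgebra.adjoin ℂ {V', P'}).topologicalClosure) := by
  let W : HC ≃ₗᵢ[ℂ] HC := b.repr.trans b'.repr.symm
  have hW : ∀ i, W (b i) = b' i := by
    intro i
    simp [W, b.repr_self]
  have ext' : ∀ T U : HC →L[ℂ] HC, (∀ i, T (b' i) = U (b' i)) → T = U := by
    intro T U h
    apply ContinuousLinearMap.ext_on (s := Set.range b')
    · exact Submodule.dense_iff_topologicalClosure_eq_top.2 b'.dense_span
    · rintro _ ⟨i, rfl⟩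
      exact h i
  have hWs : ∀ i, W.symm (b' i) = b i := by
    intro i
    rw [← hW, W.symm_apply_apply]
  let Φ := W.conjStarAlgEquiv
  have e1 : Φ V = V' := by
    apply ext'
    rintro ⟨i, k⟩
    simp only [Φ, LinearIsometryEquiv.conjStarAlgEquiv_apply_apply, hWs, hV, hV', hW]
  have e2 : Φ P = P' := by
    apply ext'
    rintro ⟨i, k⟩
    simp only [Φ, LinearIsometryEquiv.conjStarAlgEquiv_apply_apply, hWs]
    cases k with
    | zero => 
      rw [hP0, hP0']
      split_ifs
      · exact hW _
      · simp
    | succ k => rw [hP, hP']; simp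
  have main : ∀ (Ψ : (HC →L[ℂ] HC) ≃⋆ₐ[ℂ] (HC →L[ℂ] HC)) (V P V' P' : HC →L[ℂ] HC),
      Ψ V = V' → Ψ P = P' → ∀ T ∈ (StarAlgebra.adjoin ℂ {V, P}).topologicalClosure,
      Ψ T ∈ (StarAlgebra.adjoin ℂ {V', P'}).topologicalClosure := by
    intro Ψ V P V' P' h1 h2
    have hΨc : Continuous Ψ := (StarAlgEquiv.isometry Ψ).continuous
    have hle : (StarAlgebra.adjoin ℂ {V, P}).topologicalClosure ≤
        ((StarAlgebra.adjoin ℂ {V', P'}).topologicalClosure).comap (Ψ : (HC →L[ℂ] HC) →⋆ₐ[ℂ] (HC →L[ℂ] HC)) := by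
      apply StarSubalgebra.topologicalClosure_minimal
      · apply StarAlgebra.adjoin_le
        rintro T (rfl | rfl)
        · change Ψ T ∈ (StarAlgebra.adjoin ℂ {V', P'}).topologicalClosure
          rw [h1]
          exact StarSubalgebra.le_topologicalClosure _ (StarAlgebra.subset_adjoin _ _ (by simp))
        · change Ψ T ∈ (StarAlgebra.adjoin ℂ {V', P'}).topologicalClosure
          rw [h2]
          exact StarSubalgebra.le_topologicalClosure _ (StarAlgebra.subset_adjoin _ _ (by simp))
      · exact (StarSubalgebra.isClosed_topologicalClosure _).preimage hΨc
    exact hle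
  have m1 := main Φ V P V' P' e1 e2
  have m2 := main Φ.symm V' P' V P (by rw [← e1]; exact Φ.symm_apply_apply V)
    (by rw [← e2]; exact Φ.symm_apply_apply P)
  exact ⟨{
    toFun := fun T => ⟨Φ T, m1 T T.2⟩
    invFun := fun T => ⟨Φ.symm T, m2 T T.2⟩
    left_inv := fun T => Subtype.ext (Φ.symm_apply_apply T)
    right_inv := fun T => Subtype.ext (Φ.apply_symm_apply T)
    map_mul' := fun S T => Subtype.ext (map_mul Φ _ _)
    map_add' := fun S T => Subtype.ext (map_add Φ _ _)
    map_star' := fun T => Subtype.ext (map_star Φ _)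
    map_smul' := fun r T => Subtype.ext (map_smul Φ _ _) }⟩

end Aux

/-- For all reals `q, q' > 1` and `0 < c, c' < ∞`, the C*-algebras `C_{q,c}` and
`C_{q',c'}` are isomorphic as unital C*-algebras (each being isomorphic to the groupoid
C*-algebra `C*(𝔊')`); in particular the C*-algebra of the nonstandard Podleś quantum
2-sphere is independent of the parameters `q` and `c`. -/
theorem stmt_4 (q q' : ℝ) (hq : 1 < q) (hq' : 1 < q') (c c' : ℝ)
    (hc : 0 < c) (hc' : 0 < c')
    (x x' : Fin 2 → (HC →L[ℂ] HC)) (hx : IsXPair q c x) (hx' : IsXPair q' c' x') :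
    Nonempty ((Cqc x) ≃⋆ₐ[ℂ] (Cqc x')) := by
  obtain ⟨V, P, b, h1, h2, h3, h4⟩ := model hq hc hx
  obtain ⟨V', P', b', h1', h2', h3', h4'⟩ := model hq' hc' hx'
  rw [h4, h4']
  exact final_iso V P V' P' b b' h1 h1' h2 h2' h3 h3'
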